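/- Let F be a finite field with q elements, let n ≥ 2 and 2 ≤ i ≤ n, let l_i ≥ l_{i+1} ≥ ⋯ ≥ l_n ≥ 1 be integers, let l_1 ≥ 1, and let l_2, …, l_{i-1} be natural numbers. Then #R^i_{n;l_1,l_2,…,l_n} = q^{n-1} · #R^i_{n;l_1−1,l_2,…,l_n}. -/

import Mathlib

open Polynomial Matrix

/-- `P_{n;l₁,…,lₙ}`: the set of `A ∈ GL_n(F[x])` with `deg a_{i,j} ≤ l_j` for all `i, j` and
constant-term matrix equal to the identity. -/
def Pset (F : Type*) [Field F] (n : ℕ) (l : Fin n → ℕ) : Set (GL (Fin n) F[X]) :=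
  {A | (∀ i j, ((A : Matrix (Fin n) (Fin n) F[X]) i j).degree ≤ (l j : ℕ)) ∧
       (A : Matrix (Fin n) (Fin n) F[X]).map (fun p => p.coeff 0) = 1}

/-- `v_j(A) ∈ Fⁿ`: the vector of coefficients of `x^{l_j}` in the `j`-th column of `A`. -/
def colVec (F : Type*) [Field F] (n : ℕ) (l : Fin n → ℕ) (A : GL (Fin n) F[X])
    (j : Fin n) : Fin n → F :=
  fun r => ((A : Matrix (Fin n) (Fin n) F[X]) r j).coeff (l j)

/-- `R^i_{n;l₁,…,lₙ}`: those `A ∈ P_{n;l₁,…,lₙ}` such that the vectors `v_i(A),…,vₙ(A)`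
(columns with 1-based index `≥ i`) are linearly dependent over `F`. -/
def Rset (F : Type*) [Field F] (n : ℕ) (l : Fin n → ℕ) (i : ℕ) : Set (GL (Fin n) F[X]) :=
  {A ∈ Pset F n l |
    ¬ LinearIndependent F (fun j : {j : Fin n // i ≤ (j : ℕ) + 1} => colVec F n l A j)}


namespace RCount

variable {F : Type*} [Field F] {n : ℕ}

/-- matrix version of `Pset` -/
def PM (F : Type*) [Field F] (n : ℕ) (l : Fin n → ℕ) : Set (Matrix (Fin n) (Fin n) F[X]) :=
  {A | A.det = 1 ∧ (∀ i j, (A i j).natDegree ≤ l j) ∧ A.map (fun p => p.coeff 0) = 1}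

/-- leading coefficient matrix -/
def V (l : Fin n → ℕ) (A : Matrix (Fin n) (Fin n) F[X]) : Matrix (Fin n) (Fin n) F :=
  Matrix.of fun r j => (A r j).coeff (l j)

def Ind (l : Fin n → ℕ) (k : ℕ) (A : Matrix (Fin n) (Fin n) F[X]) : Prop :=
  ∀ c : Fin n → F, (∀ j : Fin n, (j : ℕ) < k → c j = 0) → V l A *ᵥ c = 0 → c = 0

def U (F : Type*) [Field F] (n : ℕ) (l : Fin n → ℕ) (k : ℕ) :
    Set (Matrix (Fin n) (Fin n) F[X]) :=
  {A ∈ PM F n l | Ind l k A}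

lemma PM_finite [Fintype F] (l : Fin n → ℕ) : (PM F n l).Finite := by
  have : Set.InjOn (fun (A : Matrix (Fin n) (Fin n) F[X]) =>
      fun (i j : Fin n) (t : Fin (∑ j, l j + 1)) => (A i j).coeff t) (PM F n l) := by
    intro A hA B hB h
    ext i j t
    by_cases ht : t < ∑ j, l j + 1
    · exact congrFun (congrFun (congrFun h i) j) ⟨t, ht⟩
    · have hl : l j ≤ ∑ j, l j := Finset.single_le_sum (fun _ _ => Nat.zero_le _) (Finset.mem_univ j)
      rw [coeff_eq_zero_of_natDegree_lt, coeff_eq_zero_of_natDegree_lt]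
      · have := hB.2.1 i j; omega
      · have := hA.2.1 i j; omega
  exact Set.Finite.of_finite_image (Set.toFinite _) this

lemma coeff_prod_deg {ι : Type*} (s : Finset ι) (f : ι → F[X]) (d : ι → ℕ)
    (h : ∀ i ∈ s, (f i).natDegree ≤ d i) :
    (∏ i ∈ s, f i).coeff (∑ i ∈ s, d i) = ∏ i ∈ s, (f i).coeff (d i) := by
  classical
  induction s using Finset.induction_on with
  | empty => simp
  | insert a s ha ih =>
    rw [Finset.prod_insert ha, Finset.sum_insert ha, Finset.prod_insert ha,
      coeff_mul_add_eq_of_natDegree_le, ih (fun i hi => h i (Finset.mem_insert_of_mem hi))]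
    · exact h a (Finset.mem_insert_self _ _)
    · exact (natDegree_prod_le _ _).trans
        (Finset.sum_le_sum fun i hi => h i (Finset.mem_insert_of_mem hi))

lemma det_V (l : Fin n → ℕ) (A : Matrix (Fin n) (Fin n) F[X])
    (h : ∀ i j, (A i j).natDegree ≤ l j) : A.det.coeff (∑ j, l j) = (V l A).det := by
  rw [Matrix.det_apply, Matrix.det_apply, finsetSum_coeff]
  refine Finset.sum_congr rfl fun σ _ => ?_
  have h1 := coeff_prod_deg Finset.univ (fun i => A (σ i) i) l (fun i _ => h _ _)
  have h2 : ∏ i, V l A (σ i) i = (∏ i, A (σ i) i).coeff (∑ j, l j) := h1.symm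
  rw [h2]
  rcases Int.units_eq_one_or (Equiv.Perm.sign σ) with h | h <;> simp [h]

lemma U_zero (l : Fin n → ℕ) (h : 1 ≤ ∑ j, l j) : U F n l 0 = ∅ := by
  ext A
  simp only [Set.mem_empty_iff_false, iff_false]
  rintro ⟨⟨h1, h2, -⟩, h3⟩
  have h0 := det_V l A h2
  rw [h1, coeff_one, if_neg (by omega)] at h0
  obtain ⟨v, hv, hv'⟩ := Matrix.exists_mulVec_eq_zero_iff.2 h0.symm
  exact hv (h3 v (by simp) hv')

lemma U_top (l : Fin n → ℕ) : U F n l n = PM F n l := by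
  ext A
  refine ⟨fun h => h.1, fun h => ⟨h, fun c hc _ => ?_⟩⟩
  ext j; exact hc j j.2

lemma PM_zero (l : Fin n → ℕ) (h : ∑ j, l j = 0) : PM F n l = {1} := by
  have hl : ∀ j, l j = 0 := by simpa using h
  ext A
  constructor
  · rintro ⟨-, h2, h3⟩
    show A = 1
    ext1 i j
    have h4 := congrFun (congrFun h3 i) j
    have h5 := h2 i j
    rw [hl] at h5
    rw [eq_C_of_natDegree_le_zero h5]
    simp only [Matrix.map_apply] at h4
    rw [h4]
    simp only [Matrix.one_apply]; split_ifs <;> simp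
  · rintro rfl
    refine ⟨by simp, ?_, ?_⟩
    · intro i j; simp [Matrix.one_apply]; split_ifs <;> simp
    · ext i j; simp [Matrix.one_apply]; split_ifs <;> simp

lemma PM_perm_sub (l : Fin n → ℕ) (σ : Equiv.Perm (Fin n)) (A : Matrix (Fin n) (Fin n) F[X])
    (hA : A ∈ PM F n l) : A.submatrix σ σ ∈ PM F n (l ∘ σ) := by
  refine ⟨by simpa using hA.1, fun i j => hA.2.1 _ _, ?_⟩
  have := congrArg (fun M => M.submatrix σ σ) hA.2.2
  simpa [Matrix.submatrix_map] using this

lemma PM_perm (l : Fin n → ℕ) (σ : Equiv.Perm (Fin n)) :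
    (PM F n (l ∘ σ)).ncard = (PM F n l).ncard := by
  symm
  refine Set.ncard_congr (fun A _ => A.submatrix σ σ) (PM_perm_sub l σ) ?_ ?_
  · intro A B _ _ h
    have := congrArg (fun M => M.submatrix σ.symm σ.symm) h
    simpa using this
  · intro B hB
    refine ⟨B.submatrix σ.symm σ.symm, ?_, by simp⟩
    have := PM_perm_sub _ σ.symm B hB
    simpa [Function.comp_assoc] using this

/-- elementary column operation -/
noncomputable def N (k : Fin n) (l : Fin n → ℕ) (c : Fin n → F) : Matrix (Fin n) (Fin n) F[X] :=
  Matrix.of fun a b => if b = k then C (c a) * X ^ (l k - l a) else 0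

lemma N_mul_N (k : Fin n) (l : Fin n → ℕ) (c d : Fin n → F) (hc : c k = 0) (hd : d k = 0) :
    N k l c * N k l d = 0 := by
  ext1 a b
  rw [Matrix.mul_apply]
  refine Finset.sum_eq_zero fun x _ => ?_
  simp only [N, Matrix.of_apply]
  by_cases h : x = k
  · subst h; simp [hd]
  · simp [h]

lemma N_neg (k : Fin n) (l : Fin n → ℕ) (c : Fin n → F) : N k l (-c) = - N k l c := by
  ext1 a b; simp [N]; split_ifs <;> simp

noncomputable def E (k : Fin n) (l : Fin n → ℕ) (c : Fin n → F) : Matrix (Fin n) (Fin n) F[X] := 1 + N k l c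

lemma E_mul_neg (k : Fin n) (l : Fin n → ℕ) (c : Fin n → F) (hc : c k = 0) :
    E k l c * E k l (-c) = 1 := by
  have := N_mul_N k l c c hc hc
  simp only [E, N_neg]
  rw [add_mul, mul_add, mul_add]
  simp [this]

lemma E_neg_mul (k : Fin n) (l : Fin n → ℕ) (c : Fin n → F) (hc : c k = 0) :
    E k l (-c) * E k l c = 1 := by
  simpa using E_mul_neg k l (-c) (by simp [hc])

lemma det_E (k : Fin n) (l : Fin n → ℕ) (c : Fin n → F) (hc : ∀ j ≤ k, c j = 0) :
    (E k l c).det = 1 := by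
  rw [Matrix.det_of_isLowerTriangular]
  · refine Finset.prod_eq_one fun i _ => ?_
    simp only [E, N, Matrix.add_apply, Matrix.of_apply, Matrix.one_apply_eq]
    split_ifs with h
    · simp [h, hc k le_rfl]
    · simp
  · intro i j hij
    replace hij : i < j := hij
    simp only [E, N, Matrix.add_apply, Matrix.of_apply, Matrix.one_apply_ne hij.ne]
    split_ifs with h
    · simp [hc i (h ▸ hij.le)]
    · simp

/-- constant-term matrix -/
noncomputable def E0 (k : Fin n) (l : Fin n → ℕ) (c : Fin n → F) : Matrix (Fin n) (Fin n) F :=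
  (E k l c).map (evalRingHom 0)

lemma E0_mul_neg (k : Fin n) (l : Fin n → ℕ) (c : Fin n → F) (hc : c k = 0) :
    E0 k l c * E0 k l (-c) = 1 := by
  rw [E0, E0, ← Matrix.map_mul, E_mul_neg k l c hc]
  simp

lemma det_E0 (k : Fin n) (l : Fin n → ℕ) (c : Fin n → F) (hc : ∀ j ≤ k, c j = 0) :
    (E0 k l c).det = 1 := by
  have := RingHom.map_det (evalRingHom (0:F)) (E k l c)
  rw [det_E k l c hc] at this
  simpa [E0] using this.symm

/-- The main transformation -/
noncomputable def T (k : Fin n) (l : Fin n → ℕ) (c : Fin n → F) (B : Matrix (Fin n) (Fin n) F[X]) :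
    Matrix (Fin n) (Fin n) F[X] :=
  (E0 k l (-c)).map C * B * E k l c

lemma T_T (k : Fin n) (l : Fin n → ℕ) (c : Fin n → F) (hc : c k = 0)
    (B : Matrix (Fin n) (Fin n) F[X]) : T k l c (T k l (-c) B) = B := by
  have h1 : (E0 k l (-c)).map (C : F →+* F[X]) * (E0 k l c).map (C : F →+* F[X]) = 1 := by
    have := E0_mul_neg k l (-c) (by simp [hc])
    rw [neg_neg] at this
    rw [← Matrix.map_mul, this]; simp
  have h2 := E_neg_mul k l c hc
  simp only [T, neg_neg]
  calc _ = ((E0 k l (-c)).map (C : F →+* F[X]) * (E0 k l c).map (C : F →+* F[X])) * B *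
      (E k l (-c) * E k l c) := by simp only [Matrix.mul_assoc]
    _ = B := by rw [h1, h2]; simp

lemma det_T (k : Fin n) (l : Fin n → ℕ) (c : Fin n → F) (hc : ∀ j ≤ k, c j = 0)
    (B : Matrix (Fin n) (Fin n) F[X]) (hB : B.det = 1) : (T k l c B).det = 1 := by
  have h1 : ((E0 k l (-c)).map (C : F →+* F[X])).det = 1 := by
    have := RingHom.map_det (C : F →+* F[X]) (E0 k l (-c))
    rw [det_E0 k l (-c) (by intro j hj; simp [hc j hj])] at this
    simpa using this.symm
  rw [T, Matrix.det_mul, Matrix.det_mul, h1, hB, det_E k l c hc]; simp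

lemma T_const (k : Fin n) (l : Fin n → ℕ) (c : Fin n → F) (hc : c k = 0)
    (B : Matrix (Fin n) (Fin n) F[X]) (hB : B.map (fun p => p.coeff 0) = 1) :
    (T k l c B).map (fun p => p.coeff 0) = 1 := by
  have key : ∀ M : Matrix (Fin n) (Fin n) F[X],
      M.map (fun p => p.coeff 0) = M.map (evalRingHom (0:F)) := by
    intro M; ext i j; simp [coeff_zero_eq_eval_zero]
  rw [key] at hB ⊢
  rw [T, Matrix.map_mul, Matrix.map_mul, hB]
  have h1 : ((E0 k l (-c)).map (C : F →+* F[X])).map (evalRingHom (0:F)) = E0 k l (-c) := by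
    ext i j; simp
  rw [h1, Matrix.mul_one]
  have h2 := E0_mul_neg k l (-c) (by simp [hc])
  rwa [neg_neg] at h2

/-- column entry of `B * E`. -/
lemma mul_E_apply (k : Fin n) (l : Fin n → ℕ) (c : Fin n → F)
    (B : Matrix (Fin n) (Fin n) F[X]) (r j : Fin n) :
    (B * E k l c) r j = B r j + if j = k then ∑ a, B r a * (C (c a) * X ^ (l k - l a)) else 0 := by
  rw [E, Matrix.mul_add, Matrix.mul_one, Matrix.add_apply, Matrix.mul_apply]
  simp only [N, Matrix.of_apply]
  split_ifs <;> simp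

lemma mul_E_deg (k : Fin n) (l : Fin n → ℕ) (hl : ∀ j, k ≤ j → l j ≤ l k) (c : Fin n → F)
    (hc : ∀ j ≤ k, c j = 0)
    (B : Matrix (Fin n) (Fin n) F[X]) (hB : ∀ i j, (B i j).natDegree ≤ l j) (r j : Fin n) :
    ((B * E k l c) r j).natDegree ≤ l j := by
  rw [mul_E_apply]
  refine (natDegree_add_le _ _).trans (max_le (hB r j) ?_)
  split_ifs with h
  · subst h
    refine natDegree_sum_le_of_forall_le _ _ fun a _ => ?_
    by_cases ha : a ≤ j
    · simp [hc a ha]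
    · have h1 := hl a (le_of_not_ge ha)
      have h2 := hB r a
      have h3 : (C (c a) * X ^ (l j - l a) : F[X]).natDegree ≤ l j - l a :=
        natDegree_C_mul_X_pow_le _ _
      have := natDegree_mul_le (p := B r a) (q := C (c a) * X ^ (l j - l a))
      omega
  · simp

/-- constant matrix of the column operation -/
def e (k : Fin n) (c : Fin n → F) : Matrix (Fin n) (Fin n) F :=
  1 + Matrix.of fun a b => if b = k then c a else 0

lemma V_mul_E (k : Fin n) (l : Fin n → ℕ) (hl : ∀ j, k ≤ j → l j ≤ l k) (c : Fin n → F)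
    (hc : ∀ j ≤ k, c j = 0) (B : Matrix (Fin n) (Fin n) F[X]) :
    V l (B * E k l c) = V l B * e k c := by
  ext r j
  rw [e, Matrix.mul_add, Matrix.mul_one, Matrix.add_apply, Matrix.mul_apply]
  simp only [V, Matrix.of_apply, mul_E_apply, coeff_add]
  congr 1
  split_ifs with h
  · subst h
    rw [finsetSum_coeff]
    refine Finset.sum_congr rfl fun a _ => ?_
    by_cases ha : a ≤ j
    · simp [hc a ha]
    · have h1 := hl a (le_of_not_ge ha)
      rw [← mul_assoc, coeff_mul_X_pow', if_pos (by omega), coeff_mul_C]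
      congr 2; omega
  · simp

lemma V_C_mul (l : Fin n → ℕ) (D : Matrix (Fin n) (Fin n) F) (B : Matrix (Fin n) (Fin n) F[X]) :
    V l (D.map C * B) = D * V l B := by
  ext r j
  simp [V, Matrix.mul_apply]

lemma C_mul_deg (l : Fin n → ℕ) (D : Matrix (Fin n) (Fin n) F) (B : Matrix (Fin n) (Fin n) F[X])
    (hB : ∀ i j, (B i j).natDegree ≤ l j) (i j : Fin n) :
    ((D.map C * B) i j).natDegree ≤ l j := by
  rw [Matrix.mul_apply]
  refine natDegree_sum_le_of_forall_le _ _ fun a _ => ?_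
  exact (natDegree_C_mul_le _ _).trans (hB a j)

lemma T_PM (k : Fin n) (l : Fin n → ℕ) (hl : ∀ j, k ≤ j → l j ≤ l k) (c : Fin n → F)
    (hc : ∀ j ≤ k, c j = 0) (B : Matrix (Fin n) (Fin n) F[X]) (hB : B ∈ PM F n l) :
    T k l c B ∈ PM F n l :=
  ⟨det_T k l c hc B hB.1, mul_E_deg k l hl c hc _ (C_mul_deg l _ _ hB.2.1),
    T_const k l c (hc k le_rfl) B hB.2.2⟩

lemma V_T (k : Fin n) (l : Fin n → ℕ) (hl : ∀ j, k ≤ j → l j ≤ l k) (c : Fin n → F)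
    (hc : ∀ j ≤ k, c j = 0) (B : Matrix (Fin n) (Fin n) F[X]) :
    V l (T k l c B) = E0 k l (-c) * V l B * e k c := by
  rw [T, V_mul_E k l hl c hc, V_C_mul]

lemma E0_inj (k : Fin n) (l : Fin n → ℕ) (c : Fin n → F) (hc : c k = 0) (v : Fin n → F)
    (h : E0 k l c *ᵥ v = 0) : v = 0 := by
  have := E0_mul_neg k l (-c) (by simp [hc])
  rw [neg_neg] at this
  rw [← Matrix.one_mulVec v, ← this, ← Matrix.mulVec_mulVec, h, Matrix.mulVec_zero]

lemma e_mulVec (k : Fin n) (c v : Fin n → F) : e k c *ᵥ v = v + v k • c := by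
  rw [e, Matrix.add_mulVec, Matrix.one_mulVec]
  congr 1
  ext a
  simp [Matrix.mulVec, dotProduct, mul_comm]

/-- for `B ∈ PM l`, `T` preserves `Ind (k+1)`. -/
lemma Ind_T (k : Fin n) (l : Fin n → ℕ) (hl : ∀ j, k ≤ j → l j ≤ l k) (c : Fin n → F)
    (hc : ∀ j ≤ k, c j = 0) (B : Matrix (Fin n) (Fin n) F[X]) (hB : Ind l (k+1) B) :
    Ind l (k+1) (T k l c B) := by
  intro d hd h
  rw [V_T k l hl c hc, ← Matrix.mulVec_mulVec, ← Matrix.mulVec_mulVec, e_mulVec,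
    hd k (by omega), zero_smul, add_zero] at h
  exact hB d hd (E0_inj k l (-c) (by simp [hc]) _ h)

lemma V_mulVec_update (k : Fin n) (l l' : Fin n → ℕ) (h : ∀ j, j ≠ k → l' j = l j)
    (B : Matrix (Fin n) (Fin n) F[X]) (d : Fin n → F) (hd : d k = 0) :
    V l' B *ᵥ d = V l B *ᵥ d := by
  ext r
  simp only [Matrix.mulVec, dotProduct, V, Matrix.of_apply]
  refine Finset.sum_congr rfl fun j _ => ?_
  by_cases hj : j = k
  · subst hj; simp [hd]
  · rw [h j hj]

lemma Ind_update (k : Fin n) (l l' : Fin n → ℕ) (h : ∀ j, j ≠ k → l' j = l j)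
    (B : Matrix (Fin n) (Fin n) F[X]) : Ind l' (k+1) B ↔ Ind l (k+1) B := by
  constructor <;> intro hB d hd h0 <;> apply hB d hd
  · rwa [V_mulVec_update k l l' h B d (hd k (by omega))]
  · rwa [← V_mulVec_update k l l' h B d (hd k (by omega))]

lemma PM_update (k : Fin n) (l : Fin n → ℕ) (hk : 1 ≤ l k) (B : Matrix (Fin n) (Fin n) F[X]) :
    B ∈ PM F n (Function.update l k (l k - 1)) ↔ B ∈ PM F n l ∧ V l B *ᵥ (Pi.single k 1) = 0 := by
  have hV : V l B *ᵥ (Pi.single k 1) = 0 ↔ ∀ r, (B r k).coeff (l k) = 0 := by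
    rw [Matrix.mulVec_single_one, funext_iff]; rfl
  rw [hV]
  constructor
  · rintro ⟨h1, h2, h3⟩
    refine ⟨⟨h1, fun i j => ?_, h3⟩, fun r => ?_⟩
    · have := h2 i j
      by_cases hj : j = k
      · subst hj; simp at this; omega
      · simpa [hj] using this
    · have := h2 r k
      simp at this
      apply coeff_eq_zero_of_natDegree_lt; omega
  · rintro ⟨⟨h1, h2, h3⟩, h4⟩
    refine ⟨h1, fun i j => ?_, h3⟩
    have := h2 i j
    by_cases hj : j = k
    · subst hj
      simp only [Function.update_self]
      exact natDegree_le_pred this (h4 i)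
    · simpa [hj] using this

lemma ncard_supp [Fintype F] (k : Fin n) :
    {c : Fin n → F | ∀ j ≤ k, c j = 0}.ncard = Fintype.card F ^ (n - 1 - k) := by
  have e1 : {c : Fin n → F | ∀ j ≤ k, c j = 0} ≃ ({j : Fin n // k < j} → F) :=
    { toFun := fun c j => c.1 j.1
      invFun := fun d => ⟨fun j => if h : k < j then d ⟨j, h⟩ else 0, by
        intro j hj; simp [not_lt.2 hj]⟩
      left_inv := by
        rintro ⟨c, hc⟩
        ext j
        by_cases h : k < j
        · simp [h]
        · simp [h, hc j (not_lt.1 h)]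
      right_inv := by
        intro d; ext j; simp [j.2] }
  rw [← Nat.card_coe_set_eq, Nat.card_congr e1, Nat.card_fun, Nat.card_eq_fintype_card,
    Nat.card_eq_fintype_card, Fintype.card_subtype]
  congr 1
  rw [Finset.filter_lt_eq_Ioi, Fin.card_Ioi]

lemma step [Fintype F] (k : Fin n) (l : Fin n → ℕ) (hl : ∀ j, k ≤ j → l j ≤ l k) (hk : 1 ≤ l k) :
    (U F n l (k+1)).ncard = (U F n l k).ncard +
      Fintype.card F ^ (n - 1 - k) * (U F n (Function.update l k (l k - 1)) (k+1)).ncard := by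
  have hfin : (U F n l (k+1)).Finite := (PM_finite l).subset fun _ h => h.1
  have hsub : U F n l k ⊆ U F n l (k+1) := fun A hA => ⟨hA.1, fun c hc => hA.2 c
    (fun j hj => hc j (by omega))⟩
  rw [← Set.ncard_sdiff_add_ncard_of_subset hsub hfin, add_comm]
  congr 1
  rw [← ncard_supp, ← Set.ncard_prod]
  have hupd : ∀ j, j ≠ k → Function.update l k (l k - 1) j = l j := by
    intro j hj; simp [hj]
  -- the relation satisfied by T c B
  have rel : ∀ c : Fin n → F, (∀ j ≤ k, c j = 0) → ∀ B : Matrix (Fin n) (Fin n) F[X],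
      V l B *ᵥ (Pi.single k 1) = 0 → V l (T k l c B) *ᵥ (Pi.single k 1 - c) = 0 := by
    intro c hc B hB
    rw [V_T k l hl c hc, ← Matrix.mulVec_mulVec, ← Matrix.mulVec_mulVec, e_mulVec]
    simp [hc k le_rfl, hB]
  symm
  refine Set.ncard_congr (fun p _ => T k l p.1 p.2) ?_ ?_ ?_
  · rintro ⟨c, B⟩ ⟨hc, hB⟩
    simp only [Set.mem_ofPred_eq] at hc hB ⊢
    obtain ⟨hB1, hB2⟩ := hB
    rw [PM_update k l hk] at hB1
    rw [Ind_update k l _ hupd] at hB2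
    refine ⟨⟨T_PM k l hl c hc B hB1.1, Ind_T k l hl c hc B hB2⟩, fun h => ?_⟩
    have := h.2 (Pi.single k 1 - c) ?_ (rel c hc B hB1.2)
    · have := congrFun this k
      simp [hc k le_rfl] at this
    · intro j hj
      have hj' : j < k := hj
      simp [hc j hj'.le, hj'.ne]
  · rintro ⟨c, B⟩ ⟨c', B'⟩ ⟨hc, hB⟩ ⟨hc', hB'⟩ h
    simp only [Set.mem_ofPred_eq] at hc hB hc' hB' h
    obtain ⟨hB1, hB2⟩ := hB
    obtain ⟨hB1', hB2'⟩ := hB'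
    rw [PM_update k l hk] at hB1 hB1'
    rw [Ind_update k l _ hupd] at hB2 hB2'
    have r1 := rel c hc B hB1.2
    have r2 := rel c' hc' B' hB1'.2
    rw [← h] at r2
    have : c - c' = 0 := by
      refine Ind_T k l hl c hc B hB2 _ (fun j hj => ?_) ?_
      · have : j ≤ k := by rw [Fin.le_def]; omega
        simp [hc j this, hc' j this]
      · have : c - c' = (Pi.single k 1 - c') - (Pi.single k 1 - c) := by abel
        rw [this, Matrix.mulVec_sub, r1, r2, sub_zero]
    have hcc : c = c' := sub_eq_zero.1 this
    subst hcc
    have h2 := congrArg (T k l (-c)) h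
    have h3 := fun M => T_T k l (-c) (by simp [hc]) M
    simp only [neg_neg] at h3
    rw [h3, h3] at h2
    rw [h2]
  · rintro A ⟨⟨hA1, hA2⟩, hA3⟩
    have hA3' : ¬ Ind l k A := fun h => hA3 ⟨hA1, h⟩
    unfold Ind at hA3'
    push Not at hA3'
    obtain ⟨d, hd, hd0, hdne⟩ := hA3'
    have hdk : d k ≠ 0 := by
      intro h
      refine hdne (hA2 d (fun j hj => ?_) hd0)
      rcases Nat.lt_succ_iff_lt_or_eq.1 hj with h' | h'
      · exact hd j h'
      · rw [Fin.ext h']; exact h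
    set c : Fin n → F := Pi.single k 1 - (d k)⁻¹ • d with hcdef
    have hc : ∀ j ≤ k, c j = 0 := by
      intro j hj
      rcases hj.lt_or_eq with h' | h'
      · simp [hcdef, hd j h', h'.ne]
      · subst h'; simp [hcdef, hdk]
    have hcn : ∀ j ≤ k, (-c) j = 0 := by
      intro j hj; simp [hc j hj]
    refine ⟨(c, T k l (-c) A), ⟨hc, ?_⟩, T_T k l c (hc k le_rfl) A⟩
    refine ⟨(PM_update k l hk _).2 ⟨T_PM k l hl _ hcn A hA1, ?_⟩,
      (Ind_update k l _ hupd _).2 (Ind_T k l hl _ hcn A hA2)⟩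
    rw [V_T k l hl _ hcn, ← Matrix.mulVec_mulVec, ← Matrix.mulVec_mulVec, e_mulVec]
    have : (Pi.single k 1 : Fin n → F) + (Pi.single k 1 : Fin n → F) k • (-c) = (d k)⁻¹ • d := by
      simp [hcdef]
    rw [this, Matrix.mulVec_smul, hd0, smul_zero, Matrix.mulVec_zero]

lemma step_zero (k : Fin n) (l : Fin n → ℕ) (hl : ∀ j, k ≤ j → l j ≤ l k) (hk : l k = 0) :
    U F n l (k+1) = U F n l k := by
  ext A
  refine ⟨fun h => ⟨h.1, fun c hc h0 => ?_⟩, fun hA => ⟨hA.1, fun c hc => hA.2 c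
    (fun j hj => hc j (by omega))⟩⟩
  refine h.2 c (fun j hj => ?_) h0
  rcases Nat.lt_succ_iff_lt_or_eq.1 hj with h' | h'
  · exact hc j h'
  · have := Fin.ext h'
    subst this
    have h1 := congrFun h0 j
    have h2 := h.1.2.2
    simp only [Matrix.mulVec, dotProduct, V, Matrix.of_apply, Pi.zero_apply] at h1
    rw [Finset.sum_eq_single j] at h1
    · have h3 := congrFun (congrFun h2 j) j
      simp at h3
      simpa [hk, h3] using h1
    · intro b _ hb
      by_cases hbj : b < j
      · simp [hc b hbj]
      · have h3 := congrFun (congrFun h2 j) b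
        have h4 := hl b (not_lt.1 hbj)
        have h5 : l b = 0 := by omega
        simp [Matrix.one_apply_ne (Ne.symm hb)] at h3
        simp [h5, h3]
    · simp

/-- expected count -/
noncomputable def g (q : ℚ) (l : Fin n → ℕ) (k : ℕ) : ℚ :=
  q ^ ((n - 1) * ∑ j, l j) *
    ∏ j ∈ Finset.univ.filter (fun j : Fin n => k ≤ (j : ℕ)), (if l j = 0 then 1 else 1 - (1 / q) ^ (j : ℕ))

lemma g_prod (q : ℚ) (l : Fin n → ℕ) (k : Fin n) :
    (∏ j ∈ Finset.univ.filter (fun j : Fin n => (k : ℕ) ≤ (j : ℕ)), (if l j = 0 then 1 else 1 - (1 / q) ^ (j : ℕ))) =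
    (if l k = 0 then 1 else 1 - (1 / q) ^ (k : ℕ)) *
    (∏ j ∈ Finset.univ.filter (fun j : Fin n => (k : ℕ) + 1 ≤ (j : ℕ)), (if l j = 0 then 1 else 1 - (1 / q) ^ (j : ℕ))) := by
  rw [← Finset.prod_insert (f := fun j : Fin n => if l j = 0 then 1 else 1 - (1 / q) ^ (j : ℕ))
    (by simp)]
  congr 1
  ext j
  simp only [Finset.mem_filter, Finset.mem_univ, true_and, Finset.mem_insert, Fin.ext_iff]
  omega

lemma sum_update (k : Fin n) (l : Fin n → ℕ) (hk : 1 ≤ l k) :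
    ∑ j, Function.update l k (l k - 1) j + 1 = ∑ j, l j := by
  rw [Finset.sum_update_of_mem (Finset.mem_univ k), ← Finset.add_sum_erase _ l (Finset.mem_univ k),
    Finset.sdiff_singleton_eq_erase]
  omega

lemma g_step (q : ℚ) (hq : q ≠ 0) (l : Fin n → ℕ) (k : Fin n) (hk : 1 ≤ l k) :
    g q l (k+1) = g q l k +
      q ^ (n - 1 - k) * g q (Function.update l k (l k - 1)) (k+1) := by
  have hp : (∏ j ∈ Finset.univ.filter (fun j : Fin n => (k : ℕ) + 1 ≤ (j : ℕ)),
      (if Function.update l k (l k - 1) j = 0 then 1 else 1 - (1 / q) ^ (j : ℕ))) =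
      ∏ j ∈ Finset.univ.filter (fun j : Fin n => (k : ℕ) + 1 ≤ (j : ℕ)), (if l j = 0 then 1 else 1 - (1 / q) ^ (j : ℕ)) := by
    refine Finset.prod_congr rfl fun j hj => ?_
    have : j ≠ k := by rintro rfl; simp at hj
    rw [Function.update_of_ne this]
  simp only [g]
  rw [g_prod, hp, if_neg (by omega), ← sum_update k l hk]
  have h1 : q ^ (n - 1 - k) * q ^ (k : ℕ) = q ^ (n - 1) := by
    rw [← pow_add]; congr 1; omega
  have h2 : q ^ (k : ℕ) * (1 / q) ^ (k : ℕ) = 1 := by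
    rw [← mul_pow, mul_one_div_cancel hq, one_pow]
  rw [mul_add, pow_add, mul_one, ← h1]
  generalize (∏ j ∈ Finset.univ.filter (fun j : Fin n => (k : ℕ) + 1 ≤ (j : ℕ)),
    (if l j = 0 then 1 else 1 - (1 / q) ^ (j : ℕ))) = P
  generalize q ^ ((n - 1) * ∑ j, Function.update l k (l k - 1) j) = Q
  linear_combination (Q * q ^ (n - 1 - (k : ℕ)) * P) * h2

lemma g_step_zero (q : ℚ) (l : Fin n → ℕ) (k : Fin n) (hk : l k = 0) :
    g q l (k+1) = g q l k := by
  simp only [g]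
  rw [g_prod, if_pos hk, one_mul]

lemma g_top (q : ℚ) (l : Fin n → ℕ) : g q l n = q ^ ((n - 1) * ∑ j, l j) := by
  simp only [g]
  rw [Finset.filter_false_of_mem]
  · simp
  · intro j _; omega

lemma g_zero (q : ℚ) (l : Fin n → ℕ) (hn : 0 < n) (h : 1 ≤ l ⟨0, hn⟩) : g q l 0 = 0 := by
  simp only [g]
  rw [Finset.prod_eq_zero (i := ⟨0, hn⟩)]
  · simp
  · simp
  · rw [if_neg (by omega)]; simp

lemma lemU [Fintype F] (s : ℕ) (hP : ∀ l : Fin n → ℕ, ∑ j, l j ≤ s →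
      ((PM F n l).ncard : ℚ) = (Fintype.card F : ℚ) ^ ((n - 1) * ∑ j, l j))
    (k : ℕ) (hk : k ≤ n) : ∀ l : Fin n → ℕ, ∑ j, l j ≤ s →
      (∀ j j' : Fin n, k ≤ (j : ℕ) → j ≤ j' → l j' ≤ l j) →
      ((U F n l k).ncard : ℚ) = g (Fintype.card F : ℚ) l k := by
  have hq : (Fintype.card F : ℚ) ≠ 0 := by exact_mod_cast Fintype.card_ne_zero
  induction hk using Nat.decreasingInduction with
  | self => intro l hl _; rw [U_top, g_top, hP l hl]
  | of_succ k hk ih =>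
    intro l hs hl
    have hl' : ∀ j, (⟨k, hk⟩ : Fin n) ≤ j → l j ≤ l ⟨k, hk⟩ := fun j hj => hl _ j le_rfl hj
    have ih1 := ih l hs (fun j j' hj => hl j j' (by omega))
    by_cases h0 : l ⟨k, hk⟩ = 0
    · have h1 := step_zero (F := F) ⟨k, hk⟩ l hl' h0
      have h2 := g_step_zero (Fintype.card F : ℚ) l ⟨k, hk⟩ h0
      simp only at h1 h2
      rw [← h1, ← h2, ih1]
    · have h0' : 1 ≤ l ⟨k, hk⟩ := by omega
      have h1 := step (F := F) ⟨k, hk⟩ l hl' h0'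
      have h2 := g_step (Fintype.card F : ℚ) hq l ⟨k, hk⟩ h0'
      have h3 := sum_update ⟨k, hk⟩ l h0'
      have ih2 := ih (Function.update l ⟨k, hk⟩ (l ⟨k, hk⟩ - 1)) (by omega) (by
        intro j j' hj hjj
        have hjj' : (j : ℕ) ≤ j' := hjj
        rw [Function.update_of_ne, Function.update_of_ne]
        · exact hl j j' (by omega) hjj
        · rintro rfl; simp at hj
        · rintro rfl; simp at hjj'; omega)
      simp only at h1 h2
      have h1' := congrArg (Nat.cast : ℕ → ℚ) h1
      push_cast at h1'
      rw [ih1, ih2] at h1'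
      linarith

lemma PM_count [Fintype F] (s : ℕ) : ∀ l : Fin n → ℕ, ∑ j, l j ≤ s →
      ((PM F n l).ncard : ℚ) = (Fintype.card F : ℚ) ^ ((n - 1) * ∑ j, l j) := by
  have hq : (Fintype.card F : ℚ) ≠ 0 := by exact_mod_cast Fintype.card_ne_zero
  induction s with
  | zero =>
    intro l hl
    have h0 : ∑ j, l j = 0 := by omega
    rw [PM_zero l h0, h0]; simp
  | succ s ih =>
    have main : ∀ l : Fin n → ℕ, ∑ j, l j ≤ s + 1 → Antitone l →
      ((PM F n l).ncard : ℚ) = (Fintype.card F : ℚ) ^ ((n - 1) * ∑ j, l j) := by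
      intro l hs hl
      by_cases hs0 : ∑ j, l j = 0
      · exact ih l (by omega)
      have hn : 0 < n := by
        rcases Nat.eq_zero_or_pos n with h | h
        · subst h; simp at hs0
        · exact h
      have hl0 : 1 ≤ l ⟨0, hn⟩ := by
        by_contra h
        apply hs0
        refine Finset.sum_eq_zero fun j _ => ?_
        have := hl (show (⟨0, hn⟩ : Fin n) ≤ j from Nat.zero_le _)
        omega
      have key : ∀ k ≤ n, ((U F n l k).ncard : ℚ) = g (Fintype.card F : ℚ) l k := by
        intro k
        induction k with
        | zero => intro _; rw [U_zero l (by omega), g_zero _ l hn hl0]; simp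
        | succ k ihk =>
          intro hk
          have ih1 := ihk (by omega)
          have hk' : k < n := by omega
          have hl' : ∀ j, (⟨k, hk'⟩ : Fin n) ≤ j → l j ≤ l ⟨k, hk'⟩ := fun j hj => hl hj
          by_cases h0 : l ⟨k, hk'⟩ = 0
          · have h1 := step_zero (F := F) ⟨k, hk'⟩ l hl' h0
            have h2 := g_step_zero (Fintype.card F : ℚ) l ⟨k, hk'⟩ h0
            simp only at h1 h2
            rw [h1, h2, ih1]
          · have h0' : 1 ≤ l ⟨k, hk'⟩ := by omega
            have h1 := step (F := F) ⟨k, hk'⟩ l hl' h0'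
            have h2 := g_step (Fintype.card F : ℚ) hq l ⟨k, hk'⟩ h0'
            have h3 := sum_update ⟨k, hk'⟩ l h0'
            have ih2 := lemU s ih (k+1) hk (Function.update l ⟨k, hk'⟩ (l ⟨k, hk'⟩ - 1))
              (by omega) (by
              intro j j' hj hjj
              have hjj' : (j : ℕ) ≤ j' := hjj
              rw [Function.update_of_ne, Function.update_of_ne]
              · exact hl hjj
              · rintro rfl; simp at hj
              · rintro rfl; simp at hjj'; omega)
            simp only at h1 h2
            have h1' := congrArg (Nat.cast : ℕ → ℚ) h1
            push_cast at h1'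
            rw [ih1, ih2] at h1'
            linarith
      have := key n le_rfl
      rwa [U_top, g_top] at this
    intro l hs
    have hmono := Tuple.monotone_sort (OrderDual.toDual ∘ l)
    set σ := Tuple.sort (OrderDual.toDual ∘ l)
    have hsum : ∑ j, (l ∘ σ) j = ∑ j, l j := Equiv.sum_comp σ l
    have := main (l ∘ σ) (by omega) (fun a b hab => hmono hab)
    rwa [PM_perm, hsum] at this

lemma val_mem (l : Fin n → ℕ) (A : GL (Fin n) F[X]) :
    A ∈ Pset F n l ↔ (A : Matrix (Fin n) (Fin n) F[X]) ∈ PM F n l := by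
  simp only [Pset, PM, Set.mem_ofPred_eq, natDegree_le_iff_degree_le]
  refine ⟨fun h => ⟨?_, h⟩, fun h => h.2⟩
  have hu : IsUnit (A : Matrix (Fin n) (Fin n) F[X]).det :=
    (Matrix.isUnit_iff_isUnit_det _).1 A.isUnit
  obtain ⟨c, hc, hc'⟩ := Polynomial.isUnit_iff.1 hu
  have h1 := RingHom.map_det (evalRingHom (0:F)) (A : Matrix (Fin n) (Fin n) F[X])
  have h2 : (evalRingHom (0:F)).mapMatrix (A : Matrix (Fin n) (Fin n) F[X]) = 1 := by
    rw [← h.2]; ext i j; simp [coeff_zero_eq_eval_zero]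
  rw [h2, ← hc'] at h1
  simp at h1
  rw [← hc', h1]; simp

lemma ind_iff (l : Fin n → ℕ) (k : ℕ) (A : GL (Fin n) F[X]) :
    LinearIndependent F (fun j : {j : Fin n // k + 1 ≤ (j : ℕ) + 1} => colVec F n l A j) ↔
    Ind l k (A : Matrix (Fin n) (Fin n) F[X]) := by
  classical
  rw [Fintype.linearIndependent_iff]
  have key : ∀ c : Fin n → F, (∀ j : Fin n, (j : ℕ) < k → c j = 0) →
      ∑ j : {j : Fin n // k + 1 ≤ (j : ℕ) + 1}, c j • colVec F n l A j =
      V l (A : Matrix (Fin n) (Fin n) F[X]) *ᵥ c := by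
    intro c hc
    ext r
    simp only [Finset.sum_apply, Pi.smul_apply, Matrix.mulVec, dotProduct, smul_eq_mul]
    rw [← Finset.sum_subtype (Finset.univ.filter fun j : Fin n => k + 1 ≤ (j : ℕ) + 1)
      (by simp) (fun j : Fin n => c j * colVec F n l A j r), Finset.sum_filter]
    refine Finset.sum_congr rfl fun j _ => ?_
    split_ifs with h
    · rw [mul_comm]; rfl
    · rw [hc j (by omega), mul_zero]
  constructor
  · intro h c hc h0
    ext j
    by_cases hj : (j : ℕ) < k
    · exact hc j hj
    · exact h (fun j => c j) ((key c hc).trans h0) ⟨j, by omega⟩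
  · intro h d hd j
    let c : Fin n → F := fun j => if h : k + 1 ≤ (j : ℕ) + 1 then d ⟨j, h⟩ else 0
    have hc : ∀ j : Fin n, (j : ℕ) < k → c j = 0 := by
      intro j hj; simp only [c]; rw [dif_neg (by omega)]
    have hcd : ∀ j : {j : Fin n // k + 1 ≤ (j : ℕ) + 1}, c j = d j := by
      intro j; simp only [c]; rw [dif_pos j.2]
    have h0 := h c hc (by rw [← key c hc, ← hd]; simp only [hcd])
    rw [← hcd, h0]; rfl

lemma R_count [Fintype F] (l : Fin n → ℕ) (k : ℕ) (hk : k ≤ n)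
    (hl : ∀ j j' : Fin n, k ≤ (j : ℕ) → j ≤ j' → l j' ≤ l j) :
    ((Rset F n l (k+1)).ncard : ℚ) = (Fintype.card F : ℚ) ^ ((n - 1) * ∑ j, l j) *
      (1 - ∏ j ∈ Finset.univ.filter (fun j : Fin n => k ≤ (j : ℕ)),
        (if l j = 0 then 1 else 1 - (1 / (Fintype.card F : ℚ)) ^ (j : ℕ))) := by
  have h1 : (Rset F n l (k+1)).ncard = (PM F n l \ U F n l k).ncard := by
    refine Set.ncard_congr (fun A _ => (A : Matrix (Fin n) (Fin n) F[X])) ?_ ?_ ?_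
    · rintro A ⟨hA, hA'⟩
      rw [ind_iff] at hA'
      exact ⟨(val_mem l A).1 hA, fun h => hA' h.2⟩
    · intro A B _ _ h; exact Units.ext h
    · rintro B ⟨hB, hB'⟩
      have hu : IsUnit B := (Matrix.isUnit_iff_isUnit_det _).2 (by rw [hB.1]; exact isUnit_one)
      obtain ⟨A, rfl⟩ := hu
      refine ⟨A, ⟨(val_mem l A).2 hB, ?_⟩, rfl⟩
      rw [ind_iff]
      exact fun h => hB' ⟨hB, h⟩
  have h2 := Set.ncard_sdiff_add_ncard_of_subset (s := U F n l k) (t := PM F n l)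
    (fun _ h => h.1) (PM_finite l)
  have h3 := PM_count (F := F) (∑ j, l j) l le_rfl
  have h4 := lemU (F := F) (∑ j, l j) (PM_count _) k hk l le_rfl hl
  have h2' := congrArg (Nat.cast : ℕ → ℚ) h2
  push_cast at h2'
  rw [h3, h4, g] at h2'
  rw [h1]
  linarith

end RCount

open RCount

theorem stmt_10 (F : Type*) [Field F] [Fintype F] (q : ℕ) (hq : Fintype.card F = q)
    (n i : ℕ) (hn : 2 ≤ n) (hi2 : 2 ≤ i) (hin : i ≤ n)
    (l : Fin n → ℕ)
    (hdesc : ∀ j j' : Fin n, i ≤ (j : ℕ) + 1 → j ≤ j' → l j' ≤ l j)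
    (hpos : ∀ j : Fin n, i ≤ (j : ℕ) + 1 → 1 ≤ l j)
    (hl1 : 1 ≤ l ⟨0, by omega⟩) :
    (Rset F n l i).ncard
      = q ^ (n - 1) *
        (Rset F n (Function.update l ⟨0, by omega⟩ (l ⟨0, by omega⟩ - 1)) i).ncard := by
  subst hq
  obtain ⟨k, rfl⟩ : ∃ k, i = k + 1 := ⟨i - 1, by omega⟩
  have hne : ∀ j : Fin n, k ≤ (j : ℕ) → j ≠ ⟨0, by omega⟩ := by
    rintro j hj rfl; simp at hj; omega
  have h1 := R_count (F := F) l k (by omega) (fun j j' hj => hdesc j j' (by omega))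
  have h2 := R_count (F := F) (Function.update l ⟨0, by omega⟩ (l ⟨0, by omega⟩ - 1)) k (by omega)
    (by
      intro j j' hj hjj
      have hjj' : (j : ℕ) ≤ j' := hjj
      rw [Function.update_of_ne (hne j hj), Function.update_of_ne (hne j' (by omega))]
      exact hdesc j j' (by omega) hjj)
  have hp : (∏ j ∈ Finset.univ.filter (fun j : Fin n => k ≤ (j : ℕ)),
      (if Function.update l ⟨0, by omega⟩ (l ⟨0, by omega⟩ - 1) j = 0 then 1
        else 1 - (1 / (Fintype.card F : ℚ)) ^ (j : ℕ))) =
      ∏ j ∈ Finset.univ.filter (fun j : Fin n => k ≤ (j : ℕ)),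
        (if l j = 0 then 1 else 1 - (1 / (Fintype.card F : ℚ)) ^ (j : ℕ)) := by
    refine Finset.prod_congr rfl fun j hj => ?_
    rw [Function.update_of_ne (hne j (by simpa using hj))]
  rw [hp] at h2
  have : ((Rset F n l (k+1)).ncard : ℚ) = (Fintype.card F : ℚ) ^ (n - 1) *
      (Rset F n (Function.update l ⟨0, by omega⟩ (l ⟨0, by omega⟩ - 1)) (k+1)).ncard := by
    rw [h1, h2, ← sum_update _ l hl1, mul_add, pow_add]
    ring
  exact_mod_cast this
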